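/- Let r > 1, fix j ∈ {1,2} and shifts γ = (γ₁, γ₂) ∈ Γ₁ × Γ₂. Assume u_k(·, α_k) ∈ L^∞(ℝ²; ℝ³) is 𝓡_𝓜-periodic and v_{(α₁,α₂)} ∈ L^∞_{2r}(ℝ² × [−L_u^z, L_u^z]) is even for all α_k ∈ 𝓐_k. Then Φ̄^{(inter)}_{j,γ}[u] ∈ L¹(Γ_𝓜), and for every G_𝓜 ∈ 𝓡_𝓜* its Fourier coefficient equals (2|Γ_𝓜|)^{−1} Σ_{α₁,α₂} ∫_{ℝ²} e^{−i G_𝓜 · (A_j x + γ_j)} v_{(α₁,α₂)}(A₁x + γ₁ + τ₁^{(α₁)} + u₁(A₁x + γ₁, α₁) − A₂x − γ₂ − τ₂^{(α₂)} − u₂(A₂x + γ₂, α₂)) dx. In particular, ⨍_{Γ_𝓜} Φ̄^{(inter)}_{1,γ}[u](x) dx = ⨍_{Γ_𝓜} Φ̄^{(inter)}_{2,γ}[u](x) dx. -/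

import Mathlib

open scoped Real BigOperators
open MeasureTheory Filter Topology Matrix

noncomputable section

/-- The 2×2 rotation matrix through angle `φ`. -/
def Rot (φ : ℝ) : Matrix (Fin 2) (Fin 2) ℝ :=
  !![Real.cos φ, -Real.sin φ; Real.sin φ, Real.cos φ]

/-- Euclidean norm on `ℝ²`. -/
def norm2 (v : Fin 2 → ℝ) : ℝ := Real.sqrt (v 0 ^ 2 + v 1 ^ 2)

/-- Euclidean norm on `ℝ³`. -/
def norm3 (v : Fin 3 → ℝ) : ℝ := Real.sqrt (v 0 ^ 2 + v 1 ^ 2 + v 2 ^ 2)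

/-- Cast an integer vector to a real vector. -/
def iv (n : Fin 2 → ℤ) : Fin 2 → ℝ := fun i => (n i : ℝ)

/-- The lattice `M ℤ²`. -/
def lat (M : Matrix (Fin 2) (Fin 2) ℝ) : Set (Fin 2 → ℝ) :=
  {v | ∃ n : Fin 2 → ℤ, v = M.mulVec (iv n)}

/-- The unit cell `M [0,1)²`. -/
def cell (M : Matrix (Fin 2) (Fin 2) ℝ) : Set (Fin 2 → ℝ) :=
  {v | ∃ t : Fin 2 → ℝ, (∀ i, t i ∈ Set.Ico (0 : ℝ) 1) ∧ v = M.mulVec t}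

/-- The reciprocal matrix `2π M⁻ᵀ`. -/
def recip (M : Matrix (Fin 2) (Fin 2) ℝ) : Matrix (Fin 2) (Fin 2) ℝ :=
  (2 * π) • (M⁻¹)ᵀ

/-- A pair of lattices with reciprocal-lattice matrices `B1`, `B2` is incommensurate iff
`G₁ + G₂ = 0` with `G_k` in the respective reciprocal lattice implies `G₁ = G₂ = 0`. -/
def Incommensurate (B1 B2 : Matrix (Fin 2) (Fin 2) ℝ) : Prop :=
  ∀ G1 ∈ lat B1, ∀ G2 ∈ lat B2, G1 + G2 = 0 → G1 = 0 ∧ G2 = 0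

/-- Euclidean distance from `v ∈ ℝ²` to the integer lattice `ℤ²`. -/
def distZ2 (v : Fin 2 → ℝ) : ℝ := ⨅ m : Fin 2 → ℤ, norm2 (v - iv m)

/-- `θ` is a `(q,K,σ)`-Diophantine 2D rotation. -/
def IsDiophantine (A : Matrix (Fin 2) (Fin 2) ℝ) (q K σ θ : ℝ) : Prop :=
  ∀ n : Fin 2 → ℤ, n ≠ 0 →
    K / norm2 (iv n) ^ (2 * σ) ≤ distZ2 ((q • (Aᵀ * Rot θ * (A⁻¹)ᵀ)).mulVec (iv n)) ∧
    K / norm2 (iv n) ^ (2 * σ) ≤ distZ2 ((q⁻¹ • (Aᵀ * Rot (-θ) * (A⁻¹)ᵀ)).mulVec (iv n))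

/-- The moiré length scale ratio `ρ_𝓜`. -/
def rhoM (q θ : ℝ) : ℝ :=
  (Real.sqrt ((Real.sqrt q - (Real.sqrt q)⁻¹) ^ 2 + 4 * Real.sin (θ / 2) ^ 2))⁻¹

/-- Riemann zeta function (for real `s > 1`, via its Dirichlet series). -/
def zetaR (s : ℝ) : ℝ := ∑' n : ℕ, ((n : ℝ) + 1) ^ (-s)

/-- Operator (spectral) norm of a 2×2 real matrix w.r.t. the Euclidean norm. -/
def opNorm2 (M : Matrix (Fin 2) (Fin 2) ℝ) : ℝ :=
  ⨆ x : {x : Fin 2 → ℝ // norm2 x ≤ 1}, norm2 (M.mulVec x.1)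

/-- Embedding `ℝ² ↪ ℝ³`, `x ↦ (x, 0)`. -/
def emb (x : Fin 2 → ℝ) : Fin 3 → ℝ := ![x 0, x 1, 0]

/-- Japanese bracket `⟨x⟩ = (1 + |x|²)^{1/2}` on `ℝ³`. -/
def jap3 (x : Fin 3 → ℝ) : ℝ := Real.sqrt (1 + norm3 x ^ 2)

/-- The region `ℝ² × [−L, L] ⊆ ℝ³`. -/
def slab (L : ℝ) : Set (Fin 3 → ℝ) := {x | x 2 ∈ Set.Icc (-L) L}

/-- Euclidean inner product on `ℝ²`. -/
def dot2 (a b : Fin 2 → ℝ) : ℝ := ∑ i, a i * b i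

/-- The index box `⟦−N, N⟧²`. -/
def box (N : ℕ) : Finset (Fin 2 → ℤ) :=
  Finset.Icc (fun _ => -(N : ℤ)) (fun _ => (N : ℤ))

/-- The normalized Dirichlet kernel `Δ_N^j` of the lattice `A_j ℤ²`. -/
def Dir (Aj : Matrix (Fin 2) (Fin 2) ℝ) (N : ℕ) (G : Fin 2 → ℝ) : ℂ :=
  (((2 * N + 1 : ℝ)) ^ 2)⁻¹ •
    ∑ n ∈ box N, Complex.exp (Complex.I * (dot2 G (Aj.mulVec (iv n)) : ℝ))

/-- The sublattice-averaged interlayer site potential `Ψ_j[u](x,y)` for pair potentials,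
with layer `a` playing the role of layer `j` and layer `b` that of layer `3−j`. -/
def PsiPair {𝓐a 𝓐b : Type} [Fintype 𝓐a] [Fintype 𝓐b]
    (Aa Ab : Matrix (Fin 2) (Fin 2) ℝ)
    (w : 𝓐a → 𝓐b → (Fin 3 → ℝ) → ℝ)
    (τa : 𝓐a → Fin 2 → ℝ) (τb : 𝓐b → Fin 2 → ℝ)
    (ua : (Fin 2 → ℝ) → 𝓐a → Fin 3 → ℝ) (ub : (Fin 2 → ℝ) → 𝓐b → Fin 3 → ℝ)
    (x y : Fin 2 → ℝ) : ℝ :=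
  (2 * |Aa.det|)⁻¹ *
    ∑ αa : 𝓐a, ∑ αb : 𝓐b, ∑' n : Fin 2 → ℤ,
      w αa αb (emb y - emb (Ab.mulVec (iv n)) + emb (τa αa) - emb (τb αb) +
        ua x αa - ub (x - y + Ab.mulVec (iv n)) αb)

/-! Let `S x` be the point of layer `b` with the same lattice coordinates as the point `x` of layer
`a`, and let `F x` be the interaction energy of the atoms at `x` and `S x`. The disregistry turns
a moiré translation into a lattice translation of layer `b`: `S (x + M n) = S x + M n + Ab (± n)`.
Since displacements are moiré periodic, the lattice sum defining the diagonal site potential is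
therefore `∑ n, F (x + M n)`, so that integrals over the moiré cell unfold to integrals of `F` over
the whole plane. The substitution `x = Aa t + γa` sends `S x` to `Ab t + γb`, and for even pair
potentials the resulting formula at `G = 0` is symmetric in the two layers. Integrability of `F`
holds because `x - S x` is an invertible affine function of `x`, along which a bounded function of
weight `s > 2` is integrable in the plane. -/

section Unfolding

variable {G α E : Type*} [AddGroup G] [AddAction G α] [MeasurableSpace α]
  [MeasurableConstVAdd G α] {μ : Measure α} [VAddInvariantMeasure G α μ] {s : Set α}
  [NormedAddCommGroup E] {f : α → E}

theorem aestronglyMeasurable_vadd_restrict (hf : AEStronglyMeasurable f μ) (g : G) :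
    AEStronglyMeasurable (fun x ↦ f (g +ᵥ x)) (μ.restrict s) :=
  (hf.comp_quasiMeasurePreserving (measurePreserving_vadd g μ).quasiMeasurePreserving).restrict

variable [Countable G]

theorem tsum_setLIntegral_enorm_vadd_ne_top (hs : IsAddFundamentalDomain G s μ)
    (hf : Integrable f μ) : ∑' g : G, ∫⁻ x in s, ‖f (g +ᵥ x)‖ₑ ∂μ ≠ ⊤ := by
  rw [← hs.lintegral_eq_tsum'' (‖f ·‖ₑ)]
  exact hf.2.ne

theorem integrableOn_tsum_vadd [CompleteSpace E] (hs : IsAddFundamentalDomain G s μ)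
    (hf : Integrable f μ) : IntegrableOn (fun x ↦ ∑' g : G, f (g +ᵥ x)) s μ := by
  have hmeas := aestronglyMeasurable_vadd_restrict (G := G) (s := s) hf.1
  refine ⟨.tsum hmeas, ?_⟩
  calc ∫⁻ x in s, ‖∑' g : G, f (g +ᵥ x)‖ₑ ∂μ
      ≤ ∫⁻ x in s, ∑' g : G, ‖f (g +ᵥ x)‖ₑ ∂μ := lintegral_mono fun _ ↦ enorm_tsum_le_tsum_enorm
    _ = ∑' g : G, ∫⁻ x in s, ‖f (g +ᵥ x)‖ₑ ∂μ := lintegral_tsum fun g ↦ (hmeas g).enorm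
    _ < ⊤ := (tsum_setLIntegral_enorm_vadd_ne_top hs hf).lt_top

theorem setIntegral_tsum_vadd [NormedSpace ℝ E] (hs : IsAddFundamentalDomain G s μ)
    (hf : Integrable f μ) : ∫ x in s, ∑' g : G, f (g +ᵥ x) ∂μ = ∫ x, f x ∂μ := by
  rw [integral_tsum (aestronglyMeasurable_vadd_restrict hf.1)
    (tsum_setLIntegral_enorm_vadd_ne_top hs hf), ← hs.integral_eq_tsum'' f hf]

end Unfolding

section AffineSubstitution

variable {ι E : Type*} [Fintype ι] [DecidableEq ι] {M : Matrix ι ι ℝ} [NormedAddCommGroup E]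
  {f : (ι → ℝ) → E}

theorem map_mulVec_add_volume (hM : IsUnit M.det) (c : ι → ℝ) :
    Measure.map (fun x ↦ M *ᵥ x + c) volume = ENNReal.ofReal |M.det⁻¹| • volume := by
  have hlin : Measurable (Matrix.toLin' M) :=
    (Matrix.toLin' M).continuous_of_finiteDimensional.measurable
  change Measure.map ((· + c) ∘ Matrix.toLin' M) volume = _
  rw [← Measure.map_map (measurable_add_const c) hlin,
    Real.map_matrix_volume_pi_eq_smul_volume_pi hM.ne_zero, Measure.map_smul,
    map_add_right_eq_self]

theorem measurableEmbedding_mulVec_add (hM : IsUnit M.det) (c : ι → ℝ) :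
    MeasurableEmbedding (fun x : ι → ℝ ↦ M *ᵥ x + c) :=
  (by fun_prop : Continuous fun x : ι → ℝ ↦ M *ᵥ x + c).measurableEmbedding
    ((add_left_injective c).comp
      (Matrix.mulVec_injective_of_isUnit ((Matrix.isUnit_iff_isUnit_det M).2 hM)))

theorem integrable_comp_mulVec_add (hM : IsUnit M.det) (c : ι → ℝ) (hf : Integrable f) :
    Integrable fun x ↦ f (M *ᵥ x + c) := by
  refine ((measurableEmbedding_mulVec_add hM c).integrable_map_iff).1 ?_
  rw [map_mulVec_add_volume hM]
  exact hf.smul_measure ENNReal.ofReal_ne_top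

theorem integral_comp_mulVec_add [NormedSpace ℝ E] (hM : IsUnit M.det) (c : ι → ℝ)
    (f : (ι → ℝ) → E) : ∫ x, f (M *ᵥ x + c) = |M.det|⁻¹ • ∫ x, f x := by
  rw [← (measurableEmbedding_mulVec_add hM c).integral_map f, map_mulVec_add_volume hM,
    integral_smul_measure, ENNReal.toReal_ofReal (abs_nonneg _), abs_inv]

end AffineSubstitution

section Lattice

variable {M : Matrix (Fin 2) (Fin 2) ℝ}

/-- The basis of `ℝ²` formed by the columns of an invertible matrix; it identifies the unit cell
of the lattice `M ℤ²` with Mathlib's `ZSpan.fundamentalDomain`. -/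
def columnBasis (M : Matrix (Fin 2) (Fin 2) ℝ) (hM : IsUnit M.det) :
    Module.Basis (Fin 2) ℝ (Fin 2 → ℝ) :=
  (Pi.basisFun ℝ (Fin 2)).map (Matrix.toLinearEquiv (Pi.basisFun ℝ (Fin 2)) M hM)

theorem cell_eq_image (M : Matrix (Fin 2) (Fin 2) ℝ) :
    cell M = Matrix.toLin' M '' Set.univ.pi fun _ ↦ Set.Ico (0 : ℝ) 1 := by
  ext x
  simp only [cell, Set.mem_ofPred_eq, Set.mem_image, Set.mem_univ_pi, Matrix.toLin'_apply,
    eq_comm (a := x)]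

theorem volume_real_cell (M : Matrix (Fin 2) (Fin 2) ℝ) : volume.real (cell M) = |M.det| := by
  rw [cell_eq_image, Measure.real, Measure.addHaar_image_linearMap, LinearMap.det_toLin',
    Real.volume_pi_Ico]
  simp

theorem cell_eq_fundamentalDomain (hM : IsUnit M.det) :
    cell M = ZSpan.fundamentalDomain (columnBasis M hM) := by
  rw [columnBasis, ← ZSpan.map_fundamentalDomain, ZSpan.fundamentalDomain_pi_basisFun,
    cell_eq_image]
  rfl

/-- The lattice `M ℤ²` as an additive group, which acts on the plane by translations. -/
abbrev latticeGroup (M : Matrix (Fin 2) (Fin 2) ℝ) (hM : IsUnit M.det) :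
    AddSubgroup (Fin 2 → ℝ) :=
  (Submodule.span ℤ (Set.range (columnBasis M hM))).toAddSubgroup

/-- The identification of `ℤ²` with `M ℤ²` that sends `n` to `M n`. -/
def latticeCoordEquiv (M : Matrix (Fin 2) (Fin 2) ℝ) (hM : IsUnit M.det) :
    (Fin 2 → ℤ) ≃ latticeGroup M hM :=
  ((columnBasis M hM).restrictScalars ℤ).equivFun.symm.toEquiv

instance countable_latticeGroup (hM : IsUnit M.det) : Countable (latticeGroup M hM) :=
  (latticeCoordEquiv M hM).symm.injective.countable

theorem coe_latticeCoordEquiv (hM : IsUnit M.det) (n : Fin 2 → ℤ) :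
    (latticeCoordEquiv M hM n : Fin 2 → ℝ) = M *ᵥ iv n := by
  have hcoord : (latticeCoordEquiv M hM n : Fin 2 → ℝ) =
      ((∑ i, n i • (columnBasis M hM).restrictScalars ℤ i :
        Submodule.span ℤ (Set.range (columnBasis M hM))) : Fin 2 → ℝ) :=
    congrArg _ (Module.Basis.equivFun_symm_apply _ n)
  have hcol (i : Fin 2) : columnBasis M hM i = M *ᵥ Pi.single i 1 := by
    rw [columnBasis, Module.Basis.map_apply, Pi.basisFun_apply, Matrix.toLinearEquiv_apply,
      Matrix.toLin_eq_toLin', Matrix.toLin'_apply]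
  simp only [hcoord, AddSubmonoidClass.coe_finsetSum, Submodule.coe_smul,
    Module.Basis.restrictScalars_apply, hcol, ← Matrix.mulVec_smul, ← Matrix.mulVec_sum]
  congr 1
  ext i
  simp [iv, Pi.single_apply]

theorem vadd_latticeCoordEquiv (hM : IsUnit M.det) (n : Fin 2 → ℤ) (x : Fin 2 → ℝ) :
    latticeCoordEquiv M hM n +ᵥ x = x + M *ᵥ iv n := by
  rw [AddSubgroup.vadd_def, coe_latticeCoordEquiv, vadd_eq_add, add_comm]

theorem isAddFundamentalDomain_cell (hM : IsUnit M.det) :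
    IsAddFundamentalDomain (latticeGroup M hM) (cell M) volume := by
  rw [cell_eq_fundamentalDomain hM]
  exact ZSpan.isAddFundamentalDomain' _ _

variable {E : Type*} [NormedAddCommGroup E] {f : (Fin 2 → ℝ) → E}

theorem tsum_lattice_eq_tsum_vadd (hM : IsUnit M.det) (f : (Fin 2 → ℝ) → E) (x : Fin 2 → ℝ) :
    ∑' n, f (x + M *ᵥ iv n) = ∑' g : latticeGroup M hM, f (g +ᵥ x) := by
  simp only [← (latticeCoordEquiv M hM).tsum_eq, vadd_latticeCoordEquiv]

theorem integrableOn_cell_tsum [CompleteSpace E] (hM : IsUnit M.det) (hf : Integrable f) :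
    IntegrableOn (fun x ↦ ∑' n, f (x + M *ᵥ iv n)) (cell M) := by
  simp only [tsum_lattice_eq_tsum_vadd hM]
  exact integrableOn_tsum_vadd (isAddFundamentalDomain_cell hM) hf

theorem setIntegral_cell_tsum [NormedSpace ℝ E] (hM : IsUnit M.det) (hf : Integrable f) :
    ∫ x in cell M, ∑' n, f (x + M *ᵥ iv n) = ∫ x, f x := by
  simp only [tsum_lattice_eq_tsum_vadd hM]
  exact setIntegral_tsum_vadd (isAddFundamentalDomain_cell hM) hf

end Lattice

section PlaneWave

theorem transpose_mul_recip {B : Matrix (Fin 2) (Fin 2) ℝ} (hB : IsUnit B.det) :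
    Bᵀ * recip B = (2 * π) • (1 : Matrix (Fin 2) (Fin 2) ℝ) := by
  rw [recip, Matrix.mul_smul, ← Matrix.transpose_mul, Matrix.nonsing_inv_mul B hB,
    Matrix.transpose_one]

/-- The character `x ↦ exp (-i G · x)` against which Fourier coefficients are computed. -/
def planeWave (G x : Fin 2 → ℝ) : ℂ :=
  Complex.exp (-(dot2 G x : ℝ) * Complex.I)

theorem planeWave_add (G x y : Fin 2 → ℝ) :
    planeWave G (x + y) = planeWave G x * planeWave G y := by
  rw [planeWave, planeWave, planeWave, ← Complex.exp_add, ← add_mul, ← neg_add,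
    ← Complex.ofReal_add]
  simp only [dot2, Pi.add_apply, mul_add, Finset.sum_add_distrib]

theorem norm_planeWave (G x : Fin 2 → ℝ) : ‖planeWave G x‖ = 1 := by
  rw [planeWave, ← Complex.ofReal_neg, Complex.norm_exp_ofReal_mul_I]

theorem continuous_planeWave (G : Fin 2 → ℝ) : Continuous (planeWave G) := by
  unfold planeWave dot2
  fun_prop

theorem planeWave_zero_left (x : Fin 2 → ℝ) : planeWave 0 x = 1 := by
  simp [planeWave, dot2]

theorem planeWave_reciprocal_lattice {B : Matrix (Fin 2) (Fin 2) ℝ} (hB : IsUnit B.det)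
    (m n : Fin 2 → ℤ) : planeWave (B *ᵥ iv m) (recip B *ᵥ iv n) = 1 := by
  have hdot : dot2 (B *ᵥ iv m) (recip B *ᵥ iv n) = 2 * π * (∑ i, m i * n i : ℤ) := by
    change B *ᵥ iv m ⬝ᵥ recip B *ᵥ iv n = _
    rw [← Matrix.vecMul_transpose, ← Matrix.dotProduct_mulVec, Matrix.mulVec_mulVec,
      transpose_mul_recip hB, Matrix.smul_mulVec, Matrix.one_mulVec, dotProduct_smul]
    simp [dotProduct, iv]
  rw [planeWave, hdot, Complex.exp_eq_one_iff]
  refine ⟨-∑ i, m i * n i, ?_⟩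
  push_cast
  ring

variable {M : Matrix (Fin 2) (Fin 2) ℝ} {f : (Fin 2 → ℝ) → ℝ} {G : Fin 2 → ℝ}

theorem integrable_planeWave_mul {μ : Measure (Fin 2 → ℝ)} (G : Fin 2 → ℝ)
    (hf : Integrable f μ) : Integrable (fun x ↦ planeWave G x * (f x : ℂ)) μ :=
  hf.ofReal.bdd_mul (continuous_planeWave G).aestronglyMeasurable
    (.of_forall fun x ↦ (norm_planeWave G x).le)

theorem setIntegral_cell_planeWave_mul_tsum (hM : IsUnit M.det) (hf : Integrable f)
    (hG : ∀ n, planeWave G (M *ᵥ iv n) = 1) :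
    ∫ x in cell M, planeWave G x * (↑(∑' n, f (x + M *ᵥ iv n)) : ℂ) =
      ∫ x, planeWave G x * (f x : ℂ) := by
  rw [← setIntegral_cell_tsum hM (integrable_planeWave_mul G hf)]
  congr 1 with x
  simp only [planeWave_add, hG, mul_one, tsum_mul_left, Complex.ofReal_tsum]

end PlaneWave

section WeightedDecay

theorem norm3_eq_norm (v : Fin 3 → ℝ) : norm3 v = ‖WithLp.toLp 2 v‖ := by
  simp [norm3, EuclideanSpace.norm_eq, Fin.sum_univ_three]

theorem norm3_nonneg (v : Fin 3 → ℝ) : 0 ≤ norm3 v :=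
  Real.sqrt_nonneg _

theorem norm3_add_le (v w : Fin 3 → ℝ) : norm3 (v + w) ≤ norm3 v + norm3 w := by
  simpa only [norm3_eq_norm, WithLp.toLp_add] using norm_add_le _ _

theorem norm3_sub_le (v w : Fin 3 → ℝ) : norm3 (v - w) ≤ norm3 v + norm3 w := by
  simpa only [norm3_eq_norm, WithLp.toLp_sub] using norm_sub_le _ _

theorem abs_apply_le_norm3 (v : Fin 3 → ℝ) (i : Fin 3) : |v i| ≤ norm3 v := by
  rw [norm3_eq_norm]
  exact PiLp.norm_apply_le (WithLp.toLp 2 v) i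

theorem emb_add (x y : Fin 2 → ℝ) : emb (x + y) = emb x + emb y := by
  simp [emb]

theorem emb_sub (x y : Fin 2 → ℝ) : emb (x - y) = emb x - emb y := by
  simp [emb]

theorem measurable_emb : Measurable emb := by
  unfold emb
  fun_prop

theorem emb_apply_two (x : Fin 2 → ℝ) : emb x 2 = 0 :=
  rfl

theorem norm_le_norm3_emb (x : Fin 2 → ℝ) : ‖x‖ ≤ norm3 (emb x) := by
  refine (pi_norm_le_iff_of_nonneg (norm3_nonneg _)).2 fun i ↦ ?_
  fin_cases i
  · exact abs_apply_le_norm3 (emb x) 0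
  · exact abs_apply_le_norm3 (emb x) 1

theorem mem_slab {L : ℝ} {x : Fin 3 → ℝ} : x ∈ slab L ↔ |x 2| ≤ L :=
  abs_le.symm

theorem slab_subset_slab {L L' : ℝ} (h : L ≤ L') : slab L ⊆ slab L' :=
  fun _ hx ↦ mem_slab.2 ((mem_slab.1 hx).trans h)

theorem one_le_jap3 (x : Fin 3 → ℝ) : 1 ≤ jap3 x :=
  Real.one_le_sqrt.2 (le_add_of_nonneg_right (sq_nonneg _))

theorem norm3_le_jap3 (x : Fin 3 → ℝ) : norm3 x ≤ jap3 x :=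
  Real.le_sqrt_of_sq_le (le_add_of_nonneg_left zero_le_one)

theorem one_add_norm_le_mul_jap3 {K : ℝ} (x : Fin 2 → ℝ) {z : Fin 3 → ℝ} (hz : norm3 z ≤ K) :
    1 + ‖x‖ ≤ (2 + K) * jap3 (emb x + z) := by
  have hx : norm3 (emb x) ≤ norm3 (emb x + z) + norm3 z := by
    simpa using norm3_sub_le (emb x + z) z
  nlinarith [norm_le_norm3_emb x, one_le_jap3 (emb x + z), norm3_le_jap3 (emb x + z),
    norm3_nonneg z]

/-- Membership of a function on `ℝ³` in the weighted space `L^∞_s(Ω)`, with a pointwise rather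
than essential bound. -/
structure WeightedBoundedOn (s : ℝ) (Ω : Set (Fin 3 → ℝ)) (w : (Fin 3 → ℝ) → ℝ) : Prop where
  measurable : Measurable w
  bounded : ∃ C : ℝ, ∀ x ∈ Ω, jap3 x ^ s * |w x| ≤ C

variable {s L K : ℝ} {Ω Ω' : Set (Fin 3 → ℝ)} {w : (Fin 3 → ℝ) → ℝ}

theorem WeightedBoundedOn.mono (hw : WeightedBoundedOn s Ω' w) (h : Ω ⊆ Ω') :
    WeightedBoundedOn s Ω w :=
  ⟨hw.measurable, hw.bounded.imp fun _ hC x hx ↦ hC x (h hx)⟩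

theorem WeightedBoundedOn.exists_abs_le (hw : WeightedBoundedOn s Ω w) (hs : 0 ≤ s) (K : ℝ) :
    ∃ C : ℝ, ∀ (x : Fin 2 → ℝ) (z : Fin 3 → ℝ), norm3 z ≤ K → emb x + z ∈ Ω →
      |w (emb x + z)| ≤ C * (1 + ‖x‖) ^ (-s) := by
  obtain ⟨C, hC⟩ := hw.bounded
  refine ⟨(2 + K) ^ s * C, fun x z hz hΩ ↦ ?_⟩
  have hK : 0 ≤ 2 + K := by linarith [norm3_nonneg z]
  have hx : 0 < 1 + ‖x‖ := by positivity
  rw [Real.rpow_neg hx.le, ← div_eq_mul_inv, le_div_iff₀ (Real.rpow_pos_of_pos hx s)]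
  calc |w (emb x + z)| * (1 + ‖x‖) ^ s
      ≤ |w (emb x + z)| * ((2 + K) * jap3 (emb x + z)) ^ s := by
        gcongr
        exact one_add_norm_le_mul_jap3 x hz
    _ = (2 + K) ^ s * (jap3 (emb x + z) ^ s * |w (emb x + z)|) := by
        rw [Real.mul_rpow hK (zero_le_one.trans (one_le_jap3 _))]
        ring
    _ ≤ (2 + K) ^ s * C := by
        gcongr
        exact hC _ hΩ

theorem WeightedBoundedOn.integrable_comp (hw : WeightedBoundedOn s (slab L) w) (hs : 2 < s)
    {D : Matrix (Fin 2) (Fin 2) ℝ} (hD : IsUnit D.det) (c : Fin 2 → ℝ)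
    {h : (Fin 2 → ℝ) → Fin 3 → ℝ} (hmeas : Measurable h) (hK : ∀ x, norm3 (h x) ≤ K)
    (hL : ∀ x, |h x 2| ≤ L) : Integrable fun x ↦ w (emb (D *ᵥ x + c) + h x) := by
  obtain ⟨C, hC⟩ := hw.exists_abs_le (by linarith) K
  have hdecay : Integrable fun x : Fin 2 → ℝ ↦ C * (1 + ‖x‖) ^ (-s) :=
    (integrable_one_add_norm (by simpa using hs)).const_mul C
  have hemb : Measurable fun x ↦ emb (D *ᵥ x + c) :=
    measurable_emb.comp (measurableEmbedding_mulVec_add hD c).measurable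
  refine (integrable_comp_mulVec_add hD c hdecay).mono'
    (hw.measurable.comp (hemb.add hmeas)).aestronglyMeasurable (.of_forall fun x ↦ ?_)
  refine hC _ _ (hK x) (mem_slab.2 ?_)
  simpa only [Pi.add_apply, emb_apply_two, zero_add] using hL x

end WeightedDecay

section MoireLattice

/-- `M` is, up to sign, the moiré matrix `(Aa⁻¹ - Ab⁻¹)⁻¹` of the lattices `Aa ℤ²` and `Ab ℤ²`.
The sign makes the notion symmetric in the two lattices. -/
def IsMoireMatrix (Aa Ab M : Matrix (Fin 2) (Fin 2) ℝ) : Prop :=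
  ∃ ε : ℤˣ, (Aa⁻¹ - Ab⁻¹) * M = ((ε : ℤ) : ℝ) • (1 : Matrix (Fin 2) (Fin 2) ℝ)

theorem isMoireMatrix_recip {A1 A2 : Matrix (Fin 2) (Fin 2) ℝ}
    (hB : IsUnit (recip A1 - recip A2).det) :
    IsMoireMatrix A1 A2 (recip (recip A1 - recip A2)) := by
  refine ⟨1, smul_right_injective _ Real.two_pi_pos.ne' ?_⟩
  have hT : (2 * π) • (A1⁻¹ - A2⁻¹) = (recip A1 - recip A2)ᵀ := by
    simp only [recip, Matrix.transpose_sub, Matrix.transpose_smul, Matrix.transpose_transpose,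
      smul_sub]
  simp only [Units.val_one, Int.cast_one, one_smul]
  rw [← Matrix.smul_mul, hT, transpose_mul_recip hB]

variable {Aa Ab M : Matrix (Fin 2) (Fin 2) ℝ}

theorem IsMoireMatrix.symm (hM : IsMoireMatrix Aa Ab M) : IsMoireMatrix Ab Aa M := by
  obtain ⟨ε, hε⟩ := hM
  refine ⟨-ε, ?_⟩
  rw [← neg_sub, Matrix.neg_mul, hε, Units.val_neg, Int.cast_neg, neg_smul]

theorem IsMoireMatrix.isUnit_det_mul (hM : IsMoireMatrix Aa Ab M) :
    IsUnit ((Aa⁻¹ - Ab⁻¹).det * M.det) := by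
  obtain ⟨ε, hε⟩ := hM
  rw [← Matrix.det_mul, hε, Matrix.det_smul, Matrix.det_one, mul_one]
  exact (ε.isUnit.map (Int.castRingHom ℝ)).pow _

theorem IsMoireMatrix.isUnit_det (hM : IsMoireMatrix Aa Ab M) : IsUnit M.det :=
  (IsUnit.mul_iff.1 hM.isUnit_det_mul).2

theorem disregistry_eq (hb : IsUnit Ab.det) : 1 - Ab * Aa⁻¹ = -(Ab * (Aa⁻¹ - Ab⁻¹)) := by
  rw [Matrix.mul_sub, Matrix.mul_nonsing_inv Ab hb, neg_sub]

theorem IsMoireMatrix.isUnit_det_disregistry (hM : IsMoireMatrix Aa Ab M)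
    (hb : IsUnit Ab.det) : IsUnit (1 - Ab * Aa⁻¹).det := by
  rw [disregistry_eq hb, Matrix.det_neg, Matrix.det_mul]
  exact (isUnit_one.neg.pow _).mul (hb.mul (IsUnit.mul_iff.1 hM.isUnit_det_mul).1)

/-- The point of layer `b` that lies over the point `x` of layer `a`, i.e. has the same lattice
coordinates: `Aa t + γa` is sent to `Ab t + γb`. -/
def registry (Aa Ab : Matrix (Fin 2) (Fin 2) ℝ) (γa γb x : Fin 2 → ℝ) : Fin 2 → ℝ :=
  (Ab * Aa⁻¹) *ᵥ (x - γa) + γb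

theorem registry_mulVec_add (ha : IsUnit Aa.det) (Ab : Matrix (Fin 2) (Fin 2) ℝ)
    (γa γb t : Fin 2 → ℝ) : registry Aa Ab γa γb (Aa *ᵥ t + γa) = Ab *ᵥ t + γb := by
  rw [registry, add_sub_cancel_right, Matrix.mulVec_mulVec,
    Matrix.nonsing_inv_mul_cancel_right _ _ ha]

theorem sub_registry (Aa Ab : Matrix (Fin 2) (Fin 2) ℝ) (γa γb x : Fin 2 → ℝ) :
    x - registry Aa Ab γa γb x = (1 - Ab * Aa⁻¹) *ᵥ x + ((Ab * Aa⁻¹) *ᵥ γa - γb) := by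
  rw [registry, Matrix.mulVec_sub, Matrix.sub_mulVec, Matrix.one_mulVec]
  abel

theorem continuous_registry (Aa Ab : Matrix (Fin 2) (Fin 2) ℝ) (γa γb : Fin 2 → ℝ) :
    Continuous (registry Aa Ab γa γb) := by
  unfold registry
  fun_prop

theorem registry_add_lattice {ε : ℤˣ}
    (hε : (Aa⁻¹ - Ab⁻¹) * M = ((ε : ℤ) : ℝ) • (1 : Matrix (Fin 2) (Fin 2) ℝ))
    (hb : IsUnit Ab.det) (γa γb x : Fin 2 → ℝ) (m : Fin 2 → ℤ) :
    registry Aa Ab γa γb (x + M *ᵥ iv m) =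
      registry Aa Ab γa γb x + Ab *ᵥ iv (ε • m) + M *ᵥ iv m := by
  have hiv : iv (ε • m) = ((Aa⁻¹ - Ab⁻¹) * M) *ᵥ iv m := by
    rw [hε, Matrix.smul_mulVec, Matrix.one_mulVec]
    ext i
    simp [iv, Units.smul_def]
  have hshift : Ab *ᵥ iv (ε • m) + M *ᵥ iv m = (Ab * Aa⁻¹) *ᵥ (M *ᵥ iv m) := by
    rw [hiv, Matrix.mulVec_mulVec, Matrix.mulVec_mulVec, ← Matrix.mul_assoc, Matrix.mul_sub,
      Matrix.mul_nonsing_inv Ab hb, Matrix.sub_mul, Matrix.one_mul, Matrix.sub_mulVec,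
      sub_add_cancel]
  rw [add_assoc, hshift, registry, registry, add_sub_right_comm, Matrix.mulVec_add]
  abel

end MoireLattice

section Displacement

/-- A bounded measurable displacement field of a layer with sublattice index set `𝓐`, periodic
over the lattice `M ℤ²`. -/
structure IsPeriodicDisplacement {𝓐 : Type*} (M : Matrix (Fin 2) (Fin 2) ℝ)
    (u : (Fin 2 → ℝ) → 𝓐 → Fin 3 → ℝ) : Prop where
  measurable : ∀ α, Measurable fun x ↦ u x α
  bounded : ∃ C : ℝ, ∀ x α, norm3 (u x α) ≤ C
  periodic : ∀ x, ∀ rM ∈ lat M, ∀ α, u (x + rM) α = u x α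

/-- The supremum norm `‖u_z‖_∞` of the out-of-plane component of a displacement field. -/
def supNormZ {𝓐 : Type*} (u : (Fin 2 → ℝ) → 𝓐 → Fin 3 → ℝ) : ℝ :=
  ⨆ x, ⨆ α, |u x α 2|

variable {𝓐 : Type*} {M : Matrix (Fin 2) (Fin 2) ℝ} {u : (Fin 2 → ℝ) → 𝓐 → Fin 3 → ℝ}

theorem IsPeriodicDisplacement.abs_le_supNormZ (hu : IsPeriodicDisplacement M u)
    (x : Fin 2 → ℝ) (α : 𝓐) : |u x α 2| ≤ supNormZ u := by
  obtain ⟨C, hC⟩ := hu.bounded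
  have : Nonempty 𝓐 := ⟨α⟩
  have hle (x : Fin 2 → ℝ) (α : 𝓐) : |u x α 2| ≤ C := (abs_apply_le_norm3 _ 2).trans (hC x α)
  calc |u x α 2| ≤ ⨆ α, |u x α 2| := le_ciSup ⟨C, Set.forall_mem_range.2 (hle x)⟩ α
    _ ≤ supNormZ u := le_ciSup (f := fun x ↦ ⨆ α, |u x α 2|)
        ⟨C, Set.forall_mem_range.2 fun x ↦ ciSup_le (hle x)⟩ x

end Displacement

section PairEnergy

variable {𝓐a 𝓐b : Type*} {w : 𝓐a → 𝓐b → (Fin 3 → ℝ) → ℝ}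
  {τa : 𝓐a → Fin 2 → ℝ} {τb : 𝓐b → Fin 2 → ℝ}
  {ua : (Fin 2 → ℝ) → 𝓐a → Fin 3 → ℝ} {ub : (Fin 2 → ℝ) → 𝓐b → Fin 3 → ℝ}
  {Aa Ab M : Matrix (Fin 2) (Fin 2) ℝ} {s : ℝ}

/-- The interaction energy of the atom of sublattice `a` at the point `p` of one layer with the
atom of sublattice `b` at the point `p'` of the other. -/
def pairEnergy (w : 𝓐a → 𝓐b → (Fin 3 → ℝ) → ℝ) (τa : 𝓐a → Fin 2 → ℝ) (τb : 𝓐b → Fin 2 → ℝ)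
    (ua : (Fin 2 → ℝ) → 𝓐a → Fin 3 → ℝ) (ub : (Fin 2 → ℝ) → 𝓐b → Fin 3 → ℝ)
    (a : 𝓐a) (b : 𝓐b) (p p' : Fin 2 → ℝ) : ℝ :=
  w a b (emb p + emb (τa a) + ua p a - emb p' - emb (τb b) - ub p' b)

theorem pairEnergy_add_lattice (hua : IsPeriodicDisplacement M ua)
    (hub : IsPeriodicDisplacement M ub) (a : 𝓐a) (b : 𝓐b) (p p' : Fin 2 → ℝ) (m : Fin 2 → ℤ) :
    pairEnergy w τa τb ua ub a b (p + M *ᵥ iv m) (p' + M *ᵥ iv m) =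
      pairEnergy w τa τb ua ub a b p p' := by
  simp only [pairEnergy, hua.periodic _ _ ⟨m, rfl⟩, hub.periodic _ _ ⟨m, rfl⟩, emb_add]
  congr 1
  abel

theorem pairEnergy_swap (hw : ∀ a b z, w a b (-z) = w a b z) (a : 𝓐a) (b : 𝓐b)
    (p p' : Fin 2 → ℝ) :
    pairEnergy (fun b a ↦ w a b) τb τa ub ua b a p' p = pairEnergy w τa τb ua ub a b p p' := by
  rw [pairEnergy, pairEnergy, ← hw]
  congr 1
  abel

theorem integrable_pairEnergy_registry (hM : IsMoireMatrix Aa Ab M) (hb : IsUnit Ab.det)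
    (hua : IsPeriodicDisplacement M ua) (hub : IsPeriodicDisplacement M ub) (hs : 2 < s)
    {a : 𝓐a} {b : 𝓐b} (hw : WeightedBoundedOn s (slab (supNormZ ua + supNormZ ub)) (w a b))
    (γa γb : Fin 2 → ℝ) :
    Integrable fun x ↦ pairEnergy w τa τb ua ub a b x (registry Aa Ab γa γb x) := by
  obtain ⟨Ca, hCa⟩ := hua.bounded
  obtain ⟨Cb, hCb⟩ := hub.bounded
  set S := registry Aa Ab γa γb
  let h (x : Fin 2 → ℝ) : Fin 3 → ℝ := emb (τa a) - emb (τb b) + (ua x a - ub (S x) b)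
  have hmeas : Measurable h := ((hua.measurable a).sub
    ((hub.measurable b).comp (continuous_registry Aa Ab γa γb).measurable)).const_add _
  have hnorm (x) : norm3 (h x) ≤ norm3 (emb (τa a) - emb (τb b)) + (Ca + Cb) :=
    (norm3_add_le _ _).trans (add_le_add_right
      ((norm3_sub_le _ _).trans (add_le_add (hCa x a) (hCb (S x) b))) _)
  have hz (x) : |h x 2| ≤ supNormZ ua + supNormZ ub := by
    have h2 : h x 2 = ua x a 2 - ub (S x) b 2 := by
      simp only [h, Pi.add_apply, Pi.sub_apply, emb_apply_two, sub_zero, zero_add]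
    rw [h2]
    exact (abs_sub _ _).trans
      (add_le_add (hua.abs_le_supNormZ x a) (hub.abs_le_supNormZ (S x) b))
  refine (hw.integrable_comp hs (hM.isUnit_det_disregistry hb) ((Ab * Aa⁻¹) *ᵥ γa - γb)
    hmeas hnorm hz).congr (.of_forall fun x ↦ ?_)
  simp only [← sub_registry, emb_sub, pairEnergy, h, S]
  congr 1
  abel

theorem integral_planeWave_mul_pairEnergy_layer (ha : IsUnit Aa.det) (G γa γb : Fin 2 → ℝ)
    (a : 𝓐a) (b : 𝓐b) :
    ∫ x, planeWave G (Aa *ᵥ x + γa) *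
        (pairEnergy w τa τb ua ub a b (Aa *ᵥ x + γa) (Ab *ᵥ x + γb) : ℂ) =
      (|Aa.det|⁻¹ : ℝ) * ∫ x, planeWave G x *
        (pairEnergy w τa τb ua ub a b x (registry Aa Ab γa γb x) : ℂ) := by
  rw [← Complex.real_smul, ← integral_comp_mulVec_add ha γa]
  simp only [registry_mulVec_add ha]

end PairEnergy

section SitePotential

variable {𝓐a 𝓐b : Type} [Fintype 𝓐a] [Fintype 𝓐b] {Aa Ab M : Matrix (Fin 2) (Fin 2) ℝ}
  {w : 𝓐a → 𝓐b → (Fin 3 → ℝ) → ℝ} {τa : 𝓐a → Fin 2 → ℝ} {τb : 𝓐b → Fin 2 → ℝ}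
  {ua : (Fin 2 → ℝ) → 𝓐a → Fin 3 → ℝ} {ub : (Fin 2 → ℝ) → 𝓐b → Fin 3 → ℝ}
  {γa γb G : Fin 2 → ℝ} {s : ℝ}

/-- The diagonal interlayer site potential `Φ̄^{(inter)}_{j,γ}[u]` of layer `a = j`. -/
def diagPotential (Aa Ab : Matrix (Fin 2) (Fin 2) ℝ) (w : 𝓐a → 𝓐b → (Fin 3 → ℝ) → ℝ)
    (τa : 𝓐a → Fin 2 → ℝ) (τb : 𝓐b → Fin 2 → ℝ)
    (ua : (Fin 2 → ℝ) → 𝓐a → Fin 3 → ℝ) (ub : (Fin 2 → ℝ) → 𝓐b → Fin 3 → ℝ)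
    (γa γb x : Fin 2 → ℝ) : ℝ :=
  PsiPair Aa Ab w τa τb ua ub x ((1 - Ab * Aa⁻¹) *ᵥ x + (Ab * Aa⁻¹) *ᵥ γa - γb)

theorem PsiPair_eq_sum_tsum_pairEnergy (x y : Fin 2 → ℝ) :
    PsiPair Aa Ab w τa τb ua ub x y = (2 * |Aa.det|)⁻¹ *
      ∑ a, ∑ b, ∑' n, pairEnergy w τa τb ua ub a b x (x - y + Ab *ᵥ iv n) := by
  simp only [PsiPair, pairEnergy, emb_add, emb_sub]
  refine congrArg _ (Finset.sum_congr rfl fun a _ ↦ Finset.sum_congr rfl fun b _ ↦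
    tsum_congr fun n ↦ congrArg (w a b) ?_)
  abel

theorem diagPotential_eq_sum_tsum_lattice (hM : IsMoireMatrix Aa Ab M) (hb : IsUnit Ab.det)
    (hua : IsPeriodicDisplacement M ua) (hub : IsPeriodicDisplacement M ub) (x : Fin 2 → ℝ) :
    diagPotential Aa Ab w τa τb ua ub γa γb x = (2 * |Aa.det|)⁻¹ *
      ∑ a, ∑ b, ∑' n, pairEnergy w τa τb ua ub a b (x + M *ᵥ iv n)
        (registry Aa Ab γa γb (x + M *ᵥ iv n)) := by
  obtain ⟨ε, hε⟩ := hM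
  rw [diagPotential, PsiPair_eq_sum_tsum_pairEnergy, add_sub_assoc, ← sub_registry,
    sub_sub_cancel]
  simp only [registry_add_lattice hε hb, pairEnergy_add_lattice hua hub,
    ← (MulAction.toPerm ε : Equiv.Perm (Fin 2 → ℤ)).tsum_eq fun n ↦ pairEnergy w τa τb ua ub _ _ x
      (registry Aa Ab γa γb x + Ab *ᵥ iv n), MulAction.toPerm_apply]

theorem integrableOn_diagPotential (hM : IsMoireMatrix Aa Ab M) (hb : IsUnit Ab.det)
    (hua : IsPeriodicDisplacement M ua) (hub : IsPeriodicDisplacement M ub) (hs : 2 < s)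
    (hw : ∀ a b, WeightedBoundedOn s (slab (supNormZ ua + supNormZ ub)) (w a b)) :
    IntegrableOn (diagPotential Aa Ab w τa τb ua ub γa γb) (cell M) := by
  have hF (a b) := integrable_pairEnergy_registry (τa := τa) (τb := τb) hM hb hua hub hs (hw a b)
    γa γb
  refine IntegrableOn.congr_fun_ae ?_
    (.of_forall fun x ↦ (diagPotential_eq_sum_tsum_lattice hM hb hua hub x).symm)
  exact (integrable_finsetSum _ fun a _ ↦ integrable_finsetSum _ fun b _ ↦
    integrableOn_cell_tsum hM.isUnit_det (hF a b)).const_mul _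

theorem setIntegral_planeWave_mul_diagPotential (hM : IsMoireMatrix Aa Ab M)
    (hb : IsUnit Ab.det) (hua : IsPeriodicDisplacement M ua) (hub : IsPeriodicDisplacement M ub)
    (hs : 2 < s) (hw : ∀ a b, WeightedBoundedOn s (slab (supNormZ ua + supNormZ ub)) (w a b))
    (hG : ∀ n, planeWave G (M *ᵥ iv n) = 1) :
    ∫ x in cell M, planeWave G x * (diagPotential Aa Ab w τa τb ua ub γa γb x : ℂ) =
      ((2 * |Aa.det|)⁻¹ : ℝ) * ∑ a, ∑ b, ∫ x, planeWave G x *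
        (pairEnergy w τa τb ua ub a b x (registry Aa Ab γa γb x) : ℂ) := by
  have hF (a b) := integrable_pairEnergy_registry (τa := τa) (τb := τb) hM hb hua hub hs (hw a b)
    γa γb
  have hterm (a b) := integrable_planeWave_mul G (integrableOn_cell_tsum hM.isUnit_det (hF a b))
  simp only [diagPotential_eq_sum_tsum_lattice hM hb hua hub, Complex.ofReal_mul,
    Complex.ofReal_sum, mul_left_comm (planeWave G _)]
  rw [integral_const_mul]
  congr 1
  simp only [Finset.mul_sum]
  rw [integral_finsetSum _ fun a _ ↦ integrable_finsetSum _ fun b _ ↦ hterm a b]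
  simp only [integral_finsetSum _ fun b _ ↦ hterm _ b,
    setIntegral_cell_planeWave_mul_tsum hM.isUnit_det (hF _ _) hG]

theorem average_planeWave_mul_diagPotential (hM : IsMoireMatrix Aa Ab M) (ha : IsUnit Aa.det)
    (hb : IsUnit Ab.det) (hua : IsPeriodicDisplacement M ua) (hub : IsPeriodicDisplacement M ub)
    (hs : 2 < s) (hw : ∀ a b, WeightedBoundedOn s (slab (supNormZ ua + supNormZ ub)) (w a b))
    (hG : ∀ n, planeWave G (M *ᵥ iv n) = 1) :
    ⨍ x in cell M, planeWave G x * (diagPotential Aa Ab w τa τb ua ub γa γb x : ℂ) =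
      ((2 * |M.det| : ℝ) : ℂ)⁻¹ * ∑ a, ∑ b, ∫ x, planeWave G (Aa *ᵥ x + γa) *
        (pairEnergy w τa τb ua ub a b (Aa *ᵥ x + γa) (Ab *ᵥ x + γb) : ℂ) := by
  simp only [integral_planeWave_mul_pairEnergy_layer ha, ← Finset.mul_sum]
  rw [setAverage_eq, setIntegral_planeWave_mul_diagPotential hM hb hua hub hs hw hG,
    volume_real_cell, Complex.real_smul]
  push_cast
  rw [mul_inv, mul_inv]
  ring

theorem average_diagPotential (hM : IsMoireMatrix Aa Ab M) (ha : IsUnit Aa.det)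
    (hb : IsUnit Ab.det) (hua : IsPeriodicDisplacement M ua) (hub : IsPeriodicDisplacement M ub)
    (hs : 2 < s) (hw : ∀ a b, WeightedBoundedOn s (slab (supNormZ ua + supNormZ ub)) (w a b)) :
    ((⨍ x in cell M, diagPotential Aa Ab w τa τb ua ub γa γb x : ℝ) : ℂ) =
      ((2 * |M.det| : ℝ) : ℂ)⁻¹ * ∑ a, ∑ b, ∫ x,
        (pairEnergy w τa τb ua ub a b (Aa *ᵥ x + γa) (Ab *ᵥ x + γb) : ℂ) := by
  have h := average_planeWave_mul_diagPotential (τa := τa) (τb := τb) (γa := γa) (γb := γb)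
    hM ha hb hua hub hs hw (fun _ ↦ planeWave_zero_left _)
  simp only [planeWave_zero_left, one_mul] at h
  rw [← h, average, average, integral_complex_ofReal]

end SitePotential

theorem isUnit_det_smul_Rot_mul {A : Matrix (Fin 2) (Fin 2) ℝ} (hA : IsUnit A.det) {c : ℝ}
    (hc : c ≠ 0) (φ : ℝ) : IsUnit (c • (Rot φ * A)).det := by
  have hRot : (Rot φ).det = 1 := by
    rw [Rot, Matrix.det_fin_two_of]
    linarith [Real.sin_sq_add_cos_sq φ]
  rw [Matrix.det_smul, Matrix.det_mul, hRot, one_mul]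
  exact (hc.isUnit.pow _).mul hA

theorem site_potential_fourier_general {r : ℝ} (hr : 1 < r)
    {A1 A2 BM AM : Matrix (Fin 2) (Fin 2) ℝ} (hA1 : IsUnit A1.det) (hA2 : IsUnit A2.det)
    (hBM : BM = recip A1 - recip A2) (hBMinv : IsUnit BM.det) (hAM : AM = recip BM)
    {𝓐1 𝓐2 : Type} [Fintype 𝓐1] [Fintype 𝓐2] (τ1 : 𝓐1 → Fin 2 → ℝ) (τ2 : 𝓐2 → Fin 2 → ℝ)
    {u1 : (Fin 2 → ℝ) → 𝓐1 → Fin 3 → ℝ} {u2 : (Fin 2 → ℝ) → 𝓐2 → Fin 3 → ℝ}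
    (hu1 : IsPeriodicDisplacement AM u1) (hu2 : IsPeriodicDisplacement AM u2)
    (γ1 γ2 : Fin 2 → ℝ) {v : 𝓐1 → 𝓐2 → (Fin 3 → ℝ) → ℝ}
    (hveven : ∀ α1 α2 z, v α1 α2 (-z) = v α1 α2 z)
    (hv : ∀ α1 α2, WeightedBoundedOn (2 * r) (slab (supNormZ u1 + supNormZ u2)) (v α1 α2)) :
    (IntegrableOn (diagPotential A1 A2 v τ1 τ2 u1 u2 γ1 γ2) (cell AM) ∧
      IntegrableOn (diagPotential A2 A1 (fun α2 α1 ↦ v α1 α2) τ2 τ1 u2 u1 γ2 γ1) (cell AM)) ∧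
    (∀ m, ⨍ x in cell AM, planeWave (BM *ᵥ iv m) x *
        (diagPotential A1 A2 v τ1 τ2 u1 u2 γ1 γ2 x : ℂ) =
      ((2 * |AM.det| : ℝ) : ℂ)⁻¹ * ∑ α1, ∑ α2, ∫ x, planeWave (BM *ᵥ iv m) (A1 *ᵥ x + γ1) *
        (pairEnergy v τ1 τ2 u1 u2 α1 α2 (A1 *ᵥ x + γ1) (A2 *ᵥ x + γ2) : ℂ)) ∧
    (∀ m, ⨍ x in cell AM, planeWave (BM *ᵥ iv m) x *
        (diagPotential A2 A1 (fun α2 α1 ↦ v α1 α2) τ2 τ1 u2 u1 γ2 γ1 x : ℂ) =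
      ((2 * |AM.det| : ℝ) : ℂ)⁻¹ * ∑ α1, ∑ α2, ∫ x, planeWave (BM *ᵥ iv m) (A2 *ᵥ x + γ2) *
        (pairEnergy v τ1 τ2 u1 u2 α1 α2 (A1 *ᵥ x + γ1) (A2 *ᵥ x + γ2) : ℂ)) ∧
    ⨍ x in cell AM, diagPotential A1 A2 v τ1 τ2 u1 u2 γ1 γ2 x =
      ⨍ x in cell AM, diagPotential A2 A1 (fun α2 α1 ↦ v α1 α2) τ2 τ1 u2 u1 γ2 γ1 x := by
  have hM : IsMoireMatrix A1 A2 AM := by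
    subst hBM hAM
    exact isMoireMatrix_recip hBMinv
  have hs : 2 < 2 * r := by linarith
  have hv' (α2 α1) : WeightedBoundedOn (2 * r) (slab (supNormZ u2 + supNormZ u1)) (v α1 α2) :=
    add_comm (supNormZ u1) _ ▸ hv α1 α2
  have hG (m n) : planeWave (BM *ᵥ iv m) (AM *ᵥ iv n) = 1 :=
    hAM ▸ planeWave_reciprocal_lattice hBMinv m n
  refine ⟨⟨integrableOn_diagPotential hM hA2 hu1 hu2 hs hv,
    integrableOn_diagPotential hM.symm hA1 hu2 hu1 hs hv'⟩, fun m ↦ ?_, fun m ↦ ?_, ?_⟩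
  · exact average_planeWave_mul_diagPotential hM hA1 hA2 hu1 hu2 hs hv (hG m)
  · rw [average_planeWave_mul_diagPotential hM.symm hA2 hA1 hu2 hu1 hs hv' (hG m),
      Finset.sum_comm]
    simp only [pairEnergy_swap hveven]
  · apply Complex.ofReal_injective
    rw [average_diagPotential hM hA1 hA2 hu1 hu2 hs hv,
      average_diagPotential hM.symm hA2 hA1 hu2 hu1 hs hv', Finset.sum_comm]
    simp only [pairEnergy_swap hveven]

/-- Lemma: Fourier coefficients of the diagonal interlayer site potential. -/
theorem site_potential_fourier (θ q r : ℝ) (hq : 0 < q) (hr : 1 < r)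
    (A A1 A2 B1 B2 BM AM D1 D2 : Matrix (Fin 2) (Fin 2) ℝ)
    (hA : IsUnit A.det)
    (hA1 : A1 = (Real.sqrt q)⁻¹ • (Rot (-(θ / 2)) * A))
    (hA2 : A2 = Real.sqrt q • (Rot (θ / 2) * A))
    (hB1 : B1 = recip A1) (hB2 : B2 = recip A2)
    (hBM : BM = B1 - B2) (hBMinv : IsUnit BM.det)
    (hAM : AM = recip BM)
    (hD1 : D1 = 1 - A2 * A1⁻¹) (hD2 : D2 = 1 - A1 * A2⁻¹)
    (hD1inv : IsUnit D1.det) (hD2inv : IsUnit D2.det)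
    (𝓐1 𝓐2 : Type) [Fintype 𝓐1] [Fintype 𝓐2] [Nonempty 𝓐1] [Nonempty 𝓐2]
    (τ1 : 𝓐1 → Fin 2 → ℝ) (τ2 : 𝓐2 → Fin 2 → ℝ)
    (u1 : (Fin 2 → ℝ) → 𝓐1 → Fin 3 → ℝ) (u2 : (Fin 2 → ℝ) → 𝓐2 → Fin 3 → ℝ)
    (γ1 γ2 : Fin 2 → ℝ) (hγ1 : γ1 ∈ cell A1) (hγ2 : γ2 ∈ cell A2)
    (hu1meas : ∀ α, Measurable fun x => u1 x α)
    (hu2meas : ∀ α, Measurable fun x => u2 x α)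
    (hu1 : ∃ C : ℝ, ∀ x α, norm3 (u1 x α) ≤ C)
    (hu2 : ∃ C : ℝ, ∀ x α, norm3 (u2 x α) ≤ C)
    (hu1per : ∀ (x : Fin 2 → ℝ), ∀ rM ∈ lat AM, ∀ α, u1 (x + rM) α = u1 x α)
    (hu2per : ∀ (x : Fin 2 → ℝ), ∀ rM ∈ lat AM, ∀ α, u2 (x + rM) α = u2 x α)
    (v : 𝓐1 → 𝓐2 → (Fin 3 → ℝ) → ℝ)
    (hvmeas : ∀ α1 α2, Measurable (v α1 α2))
    (hveven : ∀ α1 α2 z, v α1 α2 (-z) = v α1 α2 z)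
    -- v ∈ L^∞_{2r}(ℝ² × [−L_u^z, L_u^z])
    (hv : ∀ α1 α2, ∃ C : ℝ, ∀ x ∈ slab
        ((⨆ a1 : 𝓐1, ⨆ a2 : 𝓐2, norm2 (τ1 a1 - τ2 a2)) +
          (⨆ x : Fin 2 → ℝ, ⨆ α : 𝓐1, |u1 x α 2|) +
          (⨆ x : Fin 2 → ℝ, ⨆ α : 𝓐2, |u2 x α 2|)),
      jap3 x ^ (2 * r) * |v α1 α2 x| ≤ C) :
    -- Φ̄^{(inter)}_{j,γ}[u] ∈ L¹(Γ_𝓜), j = 1, 2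
    (IntegrableOn (fun x => PsiPair A1 A2 v τ1 τ2 u1 u2 x
        (D1.mulVec x + (A2 * A1⁻¹).mulVec γ1 - γ2)) (cell AM) ∧
     IntegrableOn (fun x => PsiPair A2 A1 (fun α2 α1 z => v α1 α2 z) τ2 τ1 u2 u1 x
        (D2.mulVec x + (A1 * A2⁻¹).mulVec γ2 - γ1)) (cell AM)) ∧
    -- Fourier coefficients, j = 1
    (∀ m : Fin 2 → ℤ,
      (⨍ x in cell AM,
          Complex.exp (-(dot2 (BM.mulVec (iv m)) x : ℝ) * Complex.I) *
            (PsiPair A1 A2 v τ1 τ2 u1 u2 x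
              (D1.mulVec x + (A2 * A1⁻¹).mulVec γ1 - γ2) : ℂ)) =
        ((2 * |AM.det| : ℝ) : ℂ)⁻¹ *
          ∑ α1 : 𝓐1, ∑ α2 : 𝓐2,
            ∫ x : Fin 2 → ℝ,
              Complex.exp (-(dot2 (BM.mulVec (iv m)) (A1.mulVec x + γ1) : ℝ) * Complex.I) *
                (v α1 α2
                  (emb (A1.mulVec x + γ1) + emb (τ1 α1) + u1 (A1.mulVec x + γ1) α1 -
                    emb (A2.mulVec x + γ2) - emb (τ2 α2) - u2 (A2.mulVec x + γ2) α2) : ℂ)) ∧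
    -- Fourier coefficients, j = 2
    (∀ m : Fin 2 → ℤ,
      (⨍ x in cell AM,
          Complex.exp (-(dot2 (BM.mulVec (iv m)) x : ℝ) * Complex.I) *
            (PsiPair A2 A1 (fun α2 α1 z => v α1 α2 z) τ2 τ1 u2 u1 x
              (D2.mulVec x + (A1 * A2⁻¹).mulVec γ2 - γ1) : ℂ)) =
        ((2 * |AM.det| : ℝ) : ℂ)⁻¹ *
          ∑ α1 : 𝓐1, ∑ α2 : 𝓐2,
            ∫ x : Fin 2 → ℝ,
              Complex.exp (-(dot2 (BM.mulVec (iv m)) (A2.mulVec x + γ2) : ℝ) * Complex.I) *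
                (v α1 α2
                  (emb (A1.mulVec x + γ1) + emb (τ1 α1) + u1 (A1.mulVec x + γ1) α1 -
                    emb (A2.mulVec x + γ2) - emb (τ2 α2) - u2 (A2.mulVec x + γ2) α2) : ℂ)) ∧
    -- equality of the averages for j = 1 and j = 2
    (⨍ x in cell AM, PsiPair A1 A2 v τ1 τ2 u1 u2 x
        (D1.mulVec x + (A2 * A1⁻¹).mulVec γ1 - γ2)) =
      (⨍ x in cell AM, PsiPair A2 A1 (fun α2 α1 z => v α1 α2 z) τ2 τ1 u2 u1 x
        (D2.mulVec x + (A1 * A2⁻¹).mulVec γ2 - γ1)) := by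
  subst hA1 hA2 hB1 hB2 hBM hD1 hD2
  have hq' : Real.sqrt q ≠ 0 := (Real.sqrt_pos.2 hq).ne'
  have hslab : supNormZ u1 + supNormZ u2 ≤
      (⨆ a1, ⨆ a2, norm2 (τ1 a1 - τ2 a2)) + supNormZ u1 + supNormZ u2 := by
    rw [add_assoc]
    exact le_add_of_nonneg_left
      (Real.iSup_nonneg fun _ ↦ Real.iSup_nonneg fun _ ↦ Real.sqrt_nonneg _)
  exact site_potential_fourier_general hr
    (isUnit_det_smul_Rot_mul hA (inv_ne_zero hq') _) (isUnit_det_smul_Rot_mul hA hq' _)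
    rfl hBMinv hAM τ1 τ2 ⟨hu1meas, hu1, hu1per⟩ ⟨hu2meas, hu2, hu2per⟩ γ1 γ2 hveven
    fun α1 α2 ↦ WeightedBoundedOn.mono ⟨hvmeas α1 α2, hv α1 α2⟩ (slab_subset_slab hslab)

end
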